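/- Let f, g : I → ℝ be continuous and strictly monotone, and suppose f is strictly increasing. Then A^[f] ≤ A^[g] if and only if f ∘ g⁻¹ is concave on g(I). Likewise, if f is strictly decreasing, then A^[f] ≤ A^[g] if and only if f ∘ g⁻¹ is convex on g(I). -/

import Mathlib

/-!
Write `φ = f ∘ g⁻¹`, a continuous function on the interval `g(I)`. For increasing `f`, applying `f`
to both sides turns `A^[f](a) ≤ A^[g](a)` into Jensen's inequality for `φ` at the points `g(aᵢ)`
with equal weights. Concavity of `φ` gives all these inequalities; conversely, those for pairs say
that `φ` is midpoint concave, hence concave by continuity. Replacing `f` by `-f` leaves `A^[f]`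
unchanged, which settles the decreasing case.
-/

open Set Function Filter

/-- The quasi-arithmetic mean generated by `f` on the interval `I`,
applied to a vector `a ∈ Iⁿ`: `f⁻¹((f a₁ + ⋯ + f aₙ)/n)`, where the
inverse of `f` is taken on `I`. -/
noncomputable def qam (I : Set ℝ) (f : ℝ → ℝ) {n : ℕ} (a : Fin n → ℝ) : ℝ :=
  Function.invFunOn f I ((∑ i, f (a i)) / n)

/-- The natural (pointwise) partial order on quasi-arithmetic means:
`A^[f] ≤ A^[g]` iff `A^[f](a) ≤ A^[g](a)` for every `n ≥ 1` and every `a ∈ Iⁿ`. -/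
def qamLE (I : Set ℝ) (f g : ℝ → ℝ) : Prop :=
  ∀ n : ℕ, 1 ≤ n → ∀ a : Fin n → ℝ, (∀ i, a i ∈ I) → qam I f a ≤ qam I g a

/-- `A^[f] = A^[g]` : equality of the two quasi-arithmetic means as means. -/
def qamEQ (I : Set ℝ) (f g : ℝ → ℝ) : Prop :=
  ∀ n : ℕ, 1 ≤ n → ∀ a : Fin n → ℝ, (∀ i, a i ∈ I) → qam I f a = qam I g a

/-- `f` is strictly monotone on `I` (strictly increasing or strictly decreasing). -/
def StrictMonoOrAntiOn (f : ℝ → ℝ) (I : Set ℝ) : Prop :=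
  StrictMonoOn f I ∨ StrictAntiOn f I

section MidpointConcave

lemma Icc_subset_of_midpoint_mem {T : Set ℝ} {a b : ℝ} (hT : IsClosed (T ∩ Icc a b))
    (ha : a ∈ T) (hb : b ∈ T)
    (hmid : ∀ x ∈ T ∩ Icc a b, ∀ y ∈ T ∩ Icc a b, midpoint ℝ x y ∈ T) : Icc a b ⊆ T := by
  refine hT.Icc_subset_of_forall_exists_gt ha fun x ⟨hxT, hax, hxb⟩ y hxy => ?_
  have hmem : ∀ n : ℕ, x + (b - x) / 2 ^ n ∈ T ∩ Icc a b := by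
    intro n
    induction n with
    | zero => simpa using ⟨hb, hax.trans hxb.le⟩
    | succ n ih =>
      have heq : x + (b - x) / 2 ^ (n + 1) = midpoint ℝ x (x + (b - x) / 2 ^ n) := by
        rw [midpoint_eq_smul_add, invOf_eq_inv, smul_eq_mul]
        ring
      rw [heq]
      exact ⟨hmid x ⟨hxT, hax, hxb.le⟩ _ ih,
        (convex_Icc a b).midpoint_mem ⟨hax, hxb.le⟩ ih.2⟩
  obtain ⟨n, hn⟩ := pow_unbounded_of_one_lt ((b - x) / (y - x)) one_lt_two
  have hbx_pos : 0 < b - x := sub_pos.2 hxb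
  have hyx_pos : 0 < y - x := sub_pos.2 hxy
  have hstep : (b - x) / 2 ^ n < y - x := (div_lt_comm₀ hyx_pos (by positivity)).1 hn
  exact ⟨_, (hmem n).1, lt_add_of_pos_right x (div_pos hbx_pos (by positivity)), by linarith⟩

variable {E F : Type*} [AddCommGroup E] [Module ℝ E] [TopologicalSpace E]
  [IsTopologicalAddGroup E] [ContinuousSMul ℝ E]
  [AddCommGroup F] [PartialOrder F] [IsOrderedAddMonoid F] [Module ℝ F] [IsStrictOrderedModule ℝ F]
  [TopologicalSpace F] [IsTopologicalAddGroup F] [ContinuousSMul ℝ F] [OrderClosedTopology F]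

theorem concaveOn_of_midpoint_le_map_midpoint {s : Set E} {φ : E → F} (hs : Convex ℝ s)
    (hφ : ContinuousOn φ s)
    (hmid : ∀ x ∈ s, ∀ y ∈ s, midpoint ℝ (φ x) (φ y) ≤ φ (midpoint ℝ x y)) :
    ConcaveOn ℝ s φ := by
  refine ⟨hs, fun x hx y hy a b ha hb hab => ?_⟩
  let γ : ℝ →ᵃ[ℝ] E := AffineMap.lineMap x y
  let chord : ℝ →ᵃ[ℝ] F := AffineMap.lineMap (φ x) (φ y)
  have hγ : MapsTo γ (Icc 0 1) s := fun t ht => hs.lineMap_mem hx hy ht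
  have hclosed : IsClosed ({t | chord t ≤ φ (γ t)} ∩ Icc 0 1) := by
    rw [inter_comm]
    exact isClosed_Icc.isClosed_le AffineMap.lineMap_continuous.continuousOn
      (hφ.comp AffineMap.lineMap_continuous.continuousOn hγ)
  have hsub : Icc 0 1 ⊆ {t | chord t ≤ φ (γ t)} := by
    refine Icc_subset_of_midpoint_mem hclosed (by simp [γ, chord]) (by simp [γ, chord]) ?_
    rintro t ⟨ht, ht01⟩ u ⟨hu, hu01⟩
    calc chord (midpoint ℝ t u) = midpoint ℝ (chord t) (chord u) := chord.map_midpoint t u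
      _ ≤ midpoint ℝ (φ (γ t)) (φ (γ u)) := midpoint_le_midpoint ht hu
      _ ≤ φ (midpoint ℝ (γ t) (γ u)) := hmid _ (hγ ht01) _ (hγ hu01)
      _ = φ (γ (midpoint ℝ t u)) := by rw [γ.map_midpoint]
  obtain rfl : a = 1 - b := eq_sub_of_add_eq hab
  simpa only [γ, chord, mem_ofPred_eq, AffineMap.lineMap_apply_module]
    using hsub ⟨hb, sub_nonneg.1 ha⟩

end MidpointConcave

section InvFunOn

variable {α β : Type*} [Nonempty α]

lemma continuousOn_invFunOn_image_of_strictMonoOn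
    [LinearOrder α] [TopologicalSpace α] [OrderTopology α]
    [LinearOrder β] [TopologicalSpace β] [OrderTopology β] {s : Set α} {g : α → β}
    (hs : s.OrdConnected) (hgs : (g '' s).OrdConnected) (hg : StrictMonoOn g s) :
    ContinuousOn (invFunOn g s) (g '' s) := by
  have hinv : ∀ y, invFunOn g s y.1 = ((hg.orderIso g s).symm y).1 := by
    intro y
    obtain ⟨x, rfl⟩ := (hg.orderIso g s).surjective y
    rw [OrderIso.symm_apply_apply]
    exact hg.injOn.leftInvOn_invFunOn x.2
  rw [continuousOn_iff_continuous_domRestrict]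
  exact (continuous_subtype_val.comp (hg.orderIso g s).symm.continuous).congr fun y => (hinv y).symm

lemma invFunOn_neg_neg [InvolutiveNeg β] (f : α → β) (s : Set α) (b : β) :
    invFunOn (-f) s (-b) = invFunOn f s b := by
  have hsolution : ∀ x, (x ∈ s ∧ (-f) x = -b) = (x ∈ s ∧ f x = b) := fun x => by
    rw [Pi.neg_apply, neg_inj]
  unfold invFunOn
  congr! 3 <;> simp only [hsolution]

end InvFunOn

lemma centerMass_one_eq_sum_div {n : ℕ} (u : Fin n → ℝ) :
    Finset.univ.centerMass (1 : Fin n → ℝ) u = (∑ i, u i) / n := by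
  simp [Finset.centerMass, div_eq_inv_mul]

section QuasiArithmeticMean

variable {I : Set ℝ} {f g : ℝ → ℝ} {n : ℕ} {a : Fin n → ℝ}

lemma qam_neg (I : Set ℝ) (f : ℝ → ℝ) (a : Fin n → ℝ) : qam I (-f) a = qam I f a := by
  simp only [qam, Pi.neg_apply, Finset.sum_neg_distrib, neg_div, invFunOn_neg_neg]

lemma qamLE_neg_left : qamLE I (-f) g ↔ qamLE I f g := by
  simp only [qamLE, qam_neg]

lemma StrictMonoOrAntiOn.injOn (hg : StrictMonoOrAntiOn g I) : InjOn g I :=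
  hg.elim StrictMonoOn.injOn StrictAntiOn.injOn

lemma ordConnected_image_of_continuousOn (hI : I.OrdConnected) (hf : ContinuousOn f I) :
    (f '' I).OrdConnected :=
  (hI.isPreconnected.image f hf).ordConnected

lemma StrictMonoOrAntiOn.continuousOn_invFunOn (hI : I.OrdConnected) (hgc : ContinuousOn g I)
    (hg : StrictMonoOrAntiOn g I) : ContinuousOn (invFunOn g I) (g '' I) := by
  rcases hg with hmono | hanti
  · exact continuousOn_invFunOn_image_of_strictMonoOn hI
      (ordConnected_image_of_continuousOn hI hgc) hmono
  · have hneg : ContinuousOn (invFunOn (-g) I) ((-g) '' I) :=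
      continuousOn_invFunOn_image_of_strictMonoOn hI
        (ordConnected_image_of_continuousOn hI hgc.neg) hanti.neg
    have hcomp : ContinuousOn (invFunOn (-g) I ∘ Neg.neg) (g '' I) :=
      hneg.comp continuousOn_neg (by rintro _ ⟨x, hx, rfl⟩; exact mem_image_of_mem (-g) hx)
    exact hcomp.congr fun y _ => (invFunOn_neg_neg g I y).symm

lemma average_mem_image (hI : I.OrdConnected) (hf : ContinuousOn f I) (hn : 0 < n)
    (ha : ∀ i, a i ∈ I) : (∑ i, f (a i)) / n ∈ f '' I := by
  rw [← centerMass_one_eq_sum_div]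
  exact (ordConnected_image_of_continuousOn hI hf).convex.centerMass_mem (by simp)
    (by simpa using hn) fun i _ => mem_image_of_mem f (ha i)

lemma qam_mem (hI : I.OrdConnected) (hf : ContinuousOn f I) (hn : 0 < n) (ha : ∀ i, a i ∈ I) :
    qam I f a ∈ I :=
  invFunOn_mem (average_mem_image hI hf hn ha)

lemma apply_qam (hI : I.OrdConnected) (hf : ContinuousOn f I) (hn : 0 < n) (ha : ∀ i, a i ∈ I) :
    f (qam I f a) = (∑ i, f (a i)) / n :=
  invFunOn_eq (average_mem_image hI hf hn ha)

lemma qam_le_qam_iff_average_le (hI : I.OrdConnected) (hfc : ContinuousOn f I)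
    (hgc : ContinuousOn g I) (hf : StrictMonoOn f I) (hn : 0 < n) (ha : ∀ i, a i ∈ I) :
    qam I f a ≤ qam I g a ↔ (∑ i, f (a i)) / n ≤ f (qam I g a) := by
  rw [← apply_qam hI hfc hn ha, hf.le_iff_le (qam_mem hI hfc hn ha) (qam_mem hI hgc hn ha)]

lemma average_le_apply_qam_of_concaveOn (hg : InjOn g I)
    (hconc : ConcaveOn ℝ (g '' I) (f ∘ invFunOn g I)) (hn : 0 < n) (ha : ∀ i, a i ∈ I) :
    (∑ i, f (a i)) / n ≤ f (qam I g a) := by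
  have hJensen := hconc.le_map_centerMass (t := Finset.univ) (w := (1 : Fin n → ℝ))
    (p := fun i => g (a i)) (by simp) (by simpa using hn) fun i _ => mem_image_of_mem g (ha i)
  simpa only [centerMass_one_eq_sum_div, comp_apply, hg.leftInvOn_invFunOn (ha _), qam]
    using hJensen

lemma concaveOn_of_average_pair_le_apply_qam (hI : I.OrdConnected) (hfc : ContinuousOn f I)
    (hgc : ContinuousOn g I) (hg : StrictMonoOrAntiOn g I)
    (hpair : ∀ x ∈ I, ∀ y ∈ I, (f x + f y) / 2 ≤ f (qam I g ![x, y])) :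
    ConcaveOn ℝ (g '' I) (f ∘ invFunOn g I) := by
  have hφ : ContinuousOn (f ∘ invFunOn g I) (g '' I) :=
    hfc.comp (hg.continuousOn_invFunOn hI hgc) fun _ => invFunOn_mem
  refine concaveOn_of_midpoint_le_map_midpoint
    (ordConnected_image_of_continuousOn hI hgc).convex hφ ?_
  rintro _ ⟨x, hx, rfl⟩ _ ⟨y, hy, rfl⟩
  have hinv := hg.injOn.leftInvOn_invFunOn
  simpa [qam, hinv hx, hinv hy, midpoint_eq_smul_add, div_eq_inv_mul] using hpair x hx y hy

theorem qamLE_iff_concaveOn (hI : I.OrdConnected) (hfc : ContinuousOn f I)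
    (hgc : ContinuousOn g I) (hg : StrictMonoOrAntiOn g I) (hf : StrictMonoOn f I) :
    qamLE I f g ↔ ConcaveOn ℝ (g '' I) (f ∘ invFunOn g I) := by
  constructor
  · intro hle
    refine concaveOn_of_average_pair_le_apply_qam hI hfc hgc hg fun x hx y hy => ?_
    have hxy : ∀ i, ![x, y] i ∈ I := Fin.forall_fin_two.2 ⟨hx, hy⟩
    simpa using (qam_le_qam_iff_average_le hI hfc hgc hf two_pos hxy).1
      (hle 2 one_le_two _ hxy)
  · intro hconc n hn a ha
    exact (qam_le_qam_iff_average_le hI hfc hgc hf hn ha).2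
      (average_le_apply_qam_of_concaveOn hg.injOn hconc hn ha)

end QuasiArithmeticMean

/-- For continuous strictly monotone `f g : I → ℝ`, if `f` is strictly
increasing then `A^[f] ≤ A^[g] ↔ f ∘ g⁻¹` is concave on `g(I)`; if `f` is strictly
decreasing then `A^[f] ≤ A^[g] ↔ f ∘ g⁻¹` is convex on `g(I)`. -/
theorem comparison_iff_concavity_of_f_comp_ginv
    (I : Set ℝ) (hI : I.OrdConnected) (hInontriv : ∃ x ∈ I, ∃ y ∈ I, x < y)
    (f g : ℝ → ℝ) (hfc : ContinuousOn f I) (hgc : ContinuousOn g I)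
    (hgm : StrictMonoOrAntiOn g I) :
    (StrictMonoOn f I →
      (qamLE I f g ↔ ConcaveOn ℝ (g '' I) (f ∘ Function.invFunOn g I))) ∧
    (StrictAntiOn f I →
      (qamLE I f g ↔ ConvexOn ℝ (g '' I) (f ∘ Function.invFunOn g I))) := by
  refine ⟨qamLE_iff_concaveOn hI hfc hgc hgm, fun hf => ?_⟩
  rw [← qamLE_neg_left, qamLE_iff_concaveOn hI hfc.neg hgc hgm hf.neg, ← neg_concaveOn_iff]
  rfl
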